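/- Let q be real with 0 < q < 1, h ≥ 1 an integer, w a complex number with |w| = 1, and x > 0 a real number. Then for every s ∈ ℂ the series defining the twisted Hurwitz q-Euler zeta function ζ^{(h,1)}_{E,q,w}(s,x) := (1+q) · Σ_{k=0}^∞ (-1)^k q^{hk} w^k exp(-s · log [x+k]_q) converges absolutely, and the function s ↦ ζ^{(h,1)}_{E,q,w}(s,x) is complex-differentiable (hence analytic) on all of ℂ. -/

import Mathlib

/-- The q-number `[t]_q = (1 - q^t)/(1 - q)` with real power `q ^ t`. -/
noncomputable def qNum (q t : ℝ) : ℝ := (1 - q ^ t) / (1 - q)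

/-- The twisted Hurwitz q-Euler zeta function
`ζ^{(h,1)}_{E,q,w}(s,x) = (1+q) · Σ_{k≥0} (-1)^k q^{hk} w^k [x+k]_q^{-s}`,
where `[x+k]_q^{-s} = exp (-s · log [x+k]_q)`. -/
noncomputable def twZeta (q : ℝ) (h : ℤ) (w : ℂ) (s : ℂ) (x : ℝ) : ℂ :=
  ((1 + q : ℝ) : ℂ) * ∑' k : ℕ,
    (-1 : ℂ) ^ k * (q : ℂ) ^ (h * k : ℤ) * w ^ k *
      Complex.exp (-s * (Real.log (qNum q (x + k)) : ℂ))

theorem log_qNum_bound (q : ℝ) (hq0 : 0 < q) (hq1 : q < 1) (x : ℝ) (hx : 0 < x) :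
    ∃ M : ℝ, 0 ≤ M ∧ ∀ k : ℕ, |Real.log (qNum q (x + k))| ≤ M := by
  refine ⟨|Real.log (qNum q x)| + |Real.log (1 / (1 - q))|, by positivity, fun k => ?_⟩
  have h1 : 0 < 1 - q := by linarith
  have hqx : q ^ x < 1 := Real.rpow_lt_one hq0.le hq1 hx
  have hpos : 0 < qNum q x := div_pos (by linarith) h1
  have hmono : q ^ (x + k) ≤ q ^ x :=
    Real.rpow_le_rpow_of_exponent_ge hq0 hq1.le (by simp)
  have hp : 0 < q ^ (x + k) := Real.rpow_pos_of_pos hq0 _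
  have hle : qNum q x ≤ qNum q (x + k) := by
    unfold qNum
    exact div_le_div_of_nonneg_right (by linarith) h1.le
  have hle2 : qNum q (x + k) ≤ 1 / (1 - q) := by
    unfold qNum
    exact div_le_div_of_nonneg_right (by linarith) h1.le
  have l1 := Real.log_le_log hpos hle
  have l2 := Real.log_le_log (hpos.trans_le hle) hle2
  have a1 := neg_abs_le (Real.log (qNum q x))
  have a2 := le_abs_self (Real.log (1 / (1 - q)))
  have a3 := abs_nonneg (Real.log (qNum q x))
  have a4 := abs_nonneg (Real.log (1 / (1 - q)))
  rw [abs_le]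
  constructor <;> linarith

theorem term_bound (q : ℝ) (hq0 : 0 < q) (hq1 : q < 1) (h : ℤ) (hh : 1 ≤ h)
    (w : ℂ) (hw : ‖w‖ = 1) (L M R : ℝ) (hM : 0 ≤ M) (hL : |L| ≤ M) (s : ℂ) (hs : ‖s‖ ≤ R)
    (k : ℕ) :
    ‖(-1 : ℂ) ^ k * (q : ℂ) ^ (h * k : ℤ) * w ^ k * Complex.exp (-s * (L : ℂ))‖
      ≤ q ^ k * Real.exp (R * M) := by
  have hR : 0 ≤ R := (norm_nonneg s).trans hs
  have e1 : q ^ (h * k : ℤ) ≤ q ^ k := by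
    rw [← zpow_natCast q k]
    apply zpow_le_zpow_right_of_le_one₀ hq0 hq1.le
    nlinarith [Int.natCast_nonneg k]
  have e2 : ‖Complex.exp (-s * (L : ℂ))‖ ≤ Real.exp (R * M) := by
    rw [Complex.norm_exp]
    apply Real.exp_le_exp.mpr
    refine (Complex.re_le_norm _).trans ?_
    rw [norm_mul, norm_neg, Complex.norm_real, Real.norm_eq_abs]
    exact mul_le_mul hs hL (abs_nonneg _) hR
  have e3 : ‖(-1 : ℂ) ^ k * (q : ℂ) ^ (h * k : ℤ) * w ^ k‖ = q ^ (h * k : ℤ) := by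
    rw [norm_mul, norm_mul, norm_pow, norm_pow, norm_zpow, hw, Complex.norm_real,
      Real.norm_eq_abs, abs_of_pos hq0]
    simp
  rw [norm_mul, e3]
  exact mul_le_mul e1 e2 (norm_nonneg _) (by positivity)

/-- For `0 < q < 1`, integer `h ≥ 1`, `|w| = 1` and `x > 0`, the series defining the
twisted Hurwitz q-Euler zeta function converges absolutely for every `s ∈ ℂ`, and
`s ↦ ζ^{(h,1)}_{E,q,w}(s,x)` is entire. -/
theorem stmt3 (q : ℝ) (hq0 : 0 < q) (hq1 : q < 1) (h : ℤ) (hh : 1 ≤ h)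
    (w : ℂ) (hw : ‖w‖ = 1) (x : ℝ) (hx : 0 < x) :
    (∀ s : ℂ, Summable (fun k : ℕ =>
      ‖(-1 : ℂ) ^ k * (q : ℂ) ^ (h * k : ℤ) * w ^ k *
        Complex.exp (-s * (Real.log (qNum q (x + k)) : ℂ))‖)) ∧
    Differentiable ℂ (fun s : ℂ => twZeta q h w s x) := by
  obtain ⟨M, hM, hL⟩ := log_qNum_bound q hq0 hq1 x hx
  have hsum : ∀ R : ℝ, Summable (fun k : ℕ => q ^ k * Real.exp (R * M)) := fun R =>
    (summable_geometric_of_lt_one hq0.le hq1).mul_right _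
  refine ⟨fun s => ?_, fun s => ?_⟩
  · exact Summable.of_nonneg_of_le (fun _ => norm_nonneg _)
      (fun k => term_bound q hq0 hq1 h hh w hw _ M ‖s‖ hM (hL k) s le_rfl k) (hsum ‖s‖)
  · unfold twZeta
    refine DifferentiableAt.const_mul ?_ _
    have hd := Complex.differentiableOn_tsum_of_summable_norm
      (F := fun (k : ℕ) (s : ℂ) => (-1 : ℂ) ^ k * (q : ℂ) ^ (h * k : ℤ) * w ^ k *
        Complex.exp (-s * (Real.log (qNum q (x + k)) : ℂ)))
      (U := Metric.ball 0 (‖s‖ + 1)) (hsum (‖s‖ + 1))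
      (fun k => by fun_prop) Metric.isOpen_ball
      (fun k z hz => term_bound q hq0 hq1 h hh w hw _ M (‖s‖ + 1) hM (hL k) z
        (by simpa using (mem_ball_zero_iff.mp hz).le) k)
    exact hd.differentiableAt (Metric.isOpen_ball.mem_nhds (by simp))
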